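/- Let (S_i)_{i∈I} be a family of t-conorms, (]a_i,b_i[)_{i∈I} a family of nonempty, pairwise disjoint open subintervals of [0,1], and S_I the ordinal sum of the summands (a_i,b_i,S_i)_{i∈I}. Then the natural negation N_{S_I} of S_I satisfies: N_{S_I}(1) = 0; N_{S_I}(x) = (1−a_i)·N_{S_i}((x−a_i)/(1−a_i)) + a_i whenever x ∈ [a_i,b_i[ for some i ∈ I with b_i = 1; and N_{S_I}(x) = 1 for every other x (i.e., when x ∈ [a_i,b_i] for some i with b_i < 1, or when x ∉ ⋃_{i∈I}[a_i,b_i] and x ≠ 1). -/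

import Mathlib

/-!
The value `S_I x y = 1` with `x, y < 1` can only be produced by a summand whose interval reaches `1`:
a summand on `[a i, b i]` takes values at most `b i`, and outside the summands `S_I` is `max`
(`ordSum_eq_one_cases`). By disjointness there is at most one such summand, with interval
`[a i, 1]` say (`GoodFamily.top_unique`). If `x ∈ [a i, 1[`, the set `{y | S_I x y = 1}` is the image of the
corresponding set for `S i` under the increasing affine map `[0, 1] → [a i, 1]`, and infima are
transported along it. For every other `x < 1` the set is `{1}`; the only delicate point is
`x = b j = a i`, where `0` being neutral for `S i` forces `y = 1`.
-/

open Set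

/-- A fuzzy negation: a function `N : [0,1] → [0,1]` (here modeled on `ℝ`)
with `N 0 = 1`, `N 1 = 0` and `N` decreasing on `[0,1]`. -/
def FuzzyNegation (N : ℝ → ℝ) : Prop :=
  (∀ x ∈ Icc (0:ℝ) 1, N x ∈ Icc (0:ℝ) 1) ∧
  N 0 = 1 ∧ N 1 = 0 ∧
  (∀ x ∈ Icc (0:ℝ) 1, ∀ y ∈ Icc (0:ℝ) 1, x ≤ y → N y ≤ N x)

/-- `(]a i, b i[)_{i ∈ I}` is a family of nonempty, pairwise disjoint open
subintervals of `[0,1]`. -/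
def GoodFamily {I : Type*} (a b : I → ℝ) : Prop :=
  (∀ i, 0 ≤ a i ∧ a i < b i ∧ b i ≤ 1) ∧
  (∀ i j, i ≠ j → Disjoint (Ioo (a i) (b i)) (Ioo (a j) (b j)))

/-- `NI` is the ordinal sum of the summands `(a i, b i, N i)_{i ∈ I}`:
`NI x = (1 - b i) + (b i - a i) * N i ((x - a i)/(b i - a i))` whenever
`x ∈ [a i, b i]`, and `NI x = 1 - x` otherwise. -/
def IsOrdinalSum {I : Type*} (a b : I → ℝ) (N : I → ℝ → ℝ) (NI : ℝ → ℝ) : Prop :=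
  ∀ x ∈ Icc (0:ℝ) 1,
    (∀ i, x ∈ Icc (a i) (b i) →
      NI x = (1 - b i) + (b i - a i) * N i ((x - a i) / (b i - a i))) ∧
    ((∀ i, x ∉ Icc (a i) (b i)) → NI x = 1 - x)

/-- A t-conorm on `[0,1]` (modeled on `ℝ`). -/
def IsTconorm (S : ℝ → ℝ → ℝ) : Prop :=
  (∀ x ∈ Set.Icc (0:ℝ) 1, ∀ y ∈ Set.Icc (0:ℝ) 1, S x y ∈ Set.Icc (0:ℝ) 1) ∧
  (∀ x ∈ Set.Icc (0:ℝ) 1, ∀ y ∈ Set.Icc (0:ℝ) 1, S x y = S y x) ∧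
  (∀ x ∈ Set.Icc (0:ℝ) 1, ∀ y ∈ Set.Icc (0:ℝ) 1, ∀ z ∈ Set.Icc (0:ℝ) 1,
    S x (S y z) = S (S x y) z) ∧
  (∀ x ∈ Set.Icc (0:ℝ) 1, ∀ y ∈ Set.Icc (0:ℝ) 1, ∀ z ∈ Set.Icc (0:ℝ) 1,
    x ≤ y → S x z ≤ S y z) ∧
  (∀ x ∈ Set.Icc (0:ℝ) 1, S x 0 = x)

/-- `SI` is the ordinal sum of the summands `(a i, b i, S i)_{i ∈ I}`. -/
def IsTconormOrdinalSum {I : Type*} (a b : I → ℝ) (S : I → ℝ → ℝ → ℝ)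
    (SI : ℝ → ℝ → ℝ) : Prop :=
  ∀ x ∈ Set.Icc (0:ℝ) 1, ∀ y ∈ Set.Icc (0:ℝ) 1,
    (∀ i, x ∈ Set.Icc (a i) (b i) → y ∈ Set.Icc (a i) (b i) →
      SI x y = a i + (b i - a i) *
        S i ((x - a i) / (b i - a i)) ((y - a i) / (b i - a i))) ∧
    ((∀ i, ¬(x ∈ Set.Icc (a i) (b i) ∧ y ∈ Set.Icc (a i) (b i))) →
      SI x y = max x y)

/-- The natural negation of a t-conorm `S`: `N_S x = inf {y ∈ [0,1] : S x y = 1}`. -/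
noncomputable def natNegS (S : ℝ → ℝ → ℝ) (x : ℝ) : ℝ :=
  sInf {y | y ∈ Set.Icc (0:ℝ) 1 ∧ S x y = 1}

theorem IsTconorm.zero_left {S : ℝ → ℝ → ℝ} (h : IsTconorm S) {x : ℝ} (hx : x ∈ Icc (0:ℝ) 1) :
    S 0 x = x := by
  obtain ⟨-, hc, -, -, h0⟩ := h
  rw [hc 0 (by simp) x hx, h0 x hx]

theorem IsTconorm.one_right {S : ℝ → ℝ → ℝ} (h : IsTconorm S) {x : ℝ} (hx : x ∈ Icc (0:ℝ) 1) :
    S x 1 = 1 := by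
  have h1 : (1:ℝ) ∈ Icc (0:ℝ) 1 := by simp
  have h2 := h.zero_left h1
  obtain ⟨hr, -, -, hm, -⟩ := h
  have h3 := hm 0 (by simp) x hx 1 h1 hx.1
  exact le_antisymm (hr x hx 1 h1).2 (by linarith)

theorem rescale_mem {a b x : ℝ} (hab : a < b) (hx : x ∈ Icc a b) :
    (x - a) / (b - a) ∈ Icc (0:ℝ) 1 := by
  have h : 0 < b - a := sub_pos.2 hab
  exact ⟨div_nonneg (by linarith [hx.1]) h.le, (div_le_one h).2 (by linarith [hx.2])⟩

section
variable {I : Type*} {a b : I → ℝ} {S : I → ℝ → ℝ → ℝ} {SI : ℝ → ℝ → ℝ}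

/-- Distinct summands meet at most at an endpoint. -/
theorem GoodFamily.min_le_max (hfam : GoodFamily a b) {i j : I} (hij : i ≠ j) :
    min (b i) (b j) ≤ max (a i) (a j) := by
  have h := hfam.2 i j hij
  rwa [Ioo_disjoint_Ioo] at h

/-- At most one summand reaches `1`. -/
theorem GoodFamily.top_unique (hfam : GoodFamily a b) {i j : I} (hi : b i = 1) (hj : b j = 1) :
    i = j := by
  by_contra hij
  have h := hfam.min_le_max hij
  rw [hi, hj, min_self] at h
  have h1 := (hfam.1 i).2.1
  have h2 := (hfam.1 j).2.1
  rcases le_max_iff.1 h with h | h <;> linarith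

theorem ordSum_one_right (hfam : GoodFamily a b) (hs : ∀ i, IsTconorm (S i))
    (hSI : IsTconormOrdinalSum a b S SI) {x : ℝ} (hx : x ∈ Icc (0:ℝ) 1) : SI x 1 = 1 := by
  obtain ⟨h1, h2⟩ := hSI x hx 1 (by simp)
  by_cases h : ∃ i, x ∈ Icc (a i) (b i) ∧ (1:ℝ) ∈ Icc (a i) (b i)
  · obtain ⟨i, hxi, hi⟩ := h
    have hb : b i = 1 := le_antisymm (hfam.1 i).2.2 hi.2
    have hab := (hfam.1 i).2.1
    have hne : b i - a i ≠ 0 := (sub_pos.2 hab).ne'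
    have h3 : (1 - a i) / (b i - a i) = 1 := by
      rw [hb] at hne ⊢
      exact div_self hne
    rw [h1 i hxi hi, h3, (hs i).one_right (rescale_mem hab hxi)]
    linarith
  · rw [h2 (fun i hi => h ⟨i, hi⟩), max_eq_right hx.2]

theorem ordSum_one_zero (hfam : GoodFamily a b) (hs : ∀ i, IsTconorm (S i))
    (hSI : IsTconormOrdinalSum a b S SI) : SI 1 0 = 1 := by
  obtain ⟨h1, h2⟩ := hSI 1 (by simp) 0 (by simp)
  by_cases h : ∃ i, (1:ℝ) ∈ Icc (a i) (b i) ∧ (0:ℝ) ∈ Icc (a i) (b i)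
  · obtain ⟨i, hi, h0⟩ := h
    have hb : b i = 1 := le_antisymm (hfam.1 i).2.2 hi.2
    have ha : a i = 0 := le_antisymm h0.1 (hfam.1 i).1
    rw [h1 i hi h0, ha, hb]
    simpa using (hs i).2.2.2.2 1 (by simp)
  · rw [h2 (fun i hi => h ⟨i, hi⟩)]
    simp

/-- Only a summand reaching `1` can give the value `1` at arguments below `1`. -/
theorem ordSum_eq_one_cases (hfam : GoodFamily a b) (hs : ∀ i, IsTconorm (S i))
    (hSI : IsTconormOrdinalSum a b S SI) {x y : ℝ} (hx : x ∈ Icc (0:ℝ) 1) (hx1 : x ≠ 1)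
    (hy : y ∈ Icc (0:ℝ) 1) (h : SI x y = 1) :
    y = 1 ∨ ∃ i, b i = 1 ∧ x ∈ Icc (a i) (b i) ∧ y ∈ Icc (a i) (b i) := by
  obtain ⟨h1, h2⟩ := hSI x hx y hy
  by_cases hi : ∃ i, x ∈ Icc (a i) (b i) ∧ y ∈ Icc (a i) (b i)
  · obtain ⟨i, hxi, hyi⟩ := hi
    have hab := (hfam.1 i).2.1
    refine Or.inr ⟨i, le_antisymm (hfam.1 i).2.2 ?_, hxi, hyi⟩
    have h3 := ((hs i).1 _ (rescale_mem hab hxi) _ (rescale_mem hab hyi)).2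
    rw [h1 i hxi hyi] at h
    nlinarith [mul_le_mul_of_nonneg_left h3 (sub_pos.2 hab).le]
  · rw [h2 (fun i h => hi ⟨i, h⟩)] at h
    rcases max_choice x y with hm | hm
    · exact absurd (hm.symm.trans h) hx1
    · exact Or.inl (hm.symm.trans h)

theorem natNegS_eq_one (hfam : GoodFamily a b) (hs : ∀ i, IsTconorm (S i))
    (hSI : IsTconormOrdinalSum a b S SI) {x : ℝ} (hx : x ∈ Icc (0:ℝ) 1)
    (h : ∀ y ∈ Icc (0:ℝ) 1, SI x y = 1 → y = 1) : natNegS SI x = 1 := by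
  have : {y | y ∈ Icc (0:ℝ) 1 ∧ SI x y = 1} = {1} := by
    ext y
    constructor
    · rintro ⟨hy, hy1⟩
      exact h y hy hy1
    · rintro rfl
      exact ⟨by simp, ordSum_one_right hfam hs hSI hx⟩
  rw [natNegS, this, csInf_singleton]

/-- On a summand `[a i, 1]` the natural negation is the rescaled natural negation of `S i`. -/
theorem natNegS_top (hfam : GoodFamily a b) (hs : ∀ i, IsTconorm (S i))
    (hSI : IsTconormOrdinalSum a b S SI) {i : I} (hb : b i = 1) {x : ℝ}
    (hx : x ∈ Ico (a i) (b i)) :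
    natNegS SI x = (1 - a i) * natNegS (S i) ((x - a i) / (1 - a i)) + a i := by
  obtain ⟨ha0, hab, -⟩ := hfam.1 i
  have hxi : x ∈ Icc (a i) (b i) := ⟨hx.1, hx.2.le⟩
  have hx01 : x ∈ Icc (0:ℝ) 1 := ⟨ha0.trans hx.1, by linarith [hx.2]⟩
  have hc : 0 < 1 - a i := by linarith
  have hx' : (x - a i) / (1 - a i) ∈ Icc (0:ℝ) 1 := by
    have := rescale_mem hab hxi
    rwa [hb] at this
  have key : ∀ y ∈ Icc (a i) 1, (SI x y = 1 ↔
      S i ((x - a i) / (1 - a i)) ((y - a i) / (1 - a i)) = 1) := by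
    intro y hy
    rw [(hSI x hx01 y ⟨ha0.trans hy.1, hy.2⟩).1 i hxi (by rwa [hb]), hb]
    constructor
    · intro h
      exact mul_left_cancel₀ hc.ne' (by linarith)
    · intro h
      rw [h]
      ring
  have bddA : BddBelow {y | y ∈ Icc (0:ℝ) 1 ∧ SI x y = 1} := ⟨0, fun y hy => hy.1.1⟩
  have bddT : BddBelow {y | y ∈ Icc (0:ℝ) 1 ∧ S i ((x - a i) / (1 - a i)) y = 1} :=
    ⟨0, fun y hy => hy.1.1⟩
  unfold natNegS
  apply le_antisymm
  · rw [← sub_le_iff_le_add, ← div_le_iff₀' hc]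
    refine le_csInf ⟨1, by simp, (hs i).one_right hx'⟩ ?_
    rintro z ⟨hz, hz1⟩
    rw [div_le_iff₀' hc, sub_le_iff_le_add]
    have hy : (1 - a i) * z + a i ∈ Icc (a i) 1 :=
      ⟨by nlinarith [hz.1], by nlinarith [hz.2]⟩
    refine csInf_le bddA ⟨⟨ha0.trans hy.1, hy.2⟩, (key _ hy).2 ?_⟩
    rwa [add_sub_cancel_right, mul_div_cancel_left₀ _ hc.ne']
  · refine le_csInf ⟨1, by simp, ordSum_one_right hfam hs hSI hx01⟩ ?_
    rintro y ⟨hy, hy1⟩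
    have hay : a i ≤ y := by
      rcases ordSum_eq_one_cases hfam hs hSI hx01 (by linarith [hx.2] : x < 1).ne hy hy1 with
        h | ⟨j, hj, -, hyj⟩
      · linarith
      · rw [hfam.top_unique hb hj]
        exact hyj.1
    have hy' : y ∈ Icc (a i) 1 := ⟨hay, hy.2⟩
    have hmem := rescale_mem (by linarith : a i < 1) hy'
    rw [← le_sub_iff_add_le, ← le_div_iff₀' hc]
    exact csInf_le bddT ⟨hmem, (key y hy').1 hy1⟩

end

theorem natNeg_tconorm_ordinalSum {I : Type*} (a b : I → ℝ)
    (S : I → ℝ → ℝ → ℝ) (SI : ℝ → ℝ → ℝ)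
    (hfam : GoodFamily a b) (hs : ∀ i, IsTconorm (S i))
    (hSI : IsTconormOrdinalSum a b S SI) :
    natNegS SI 1 = 0 ∧
    (∀ i, b i = 1 → ∀ x ∈ Ico (a i) (b i),
      natNegS SI x = (1 - a i) * natNegS (S i) ((x - a i) / (1 - a i)) + a i) ∧
    (∀ i, b i < 1 → ∀ x ∈ Icc (a i) (b i), natNegS SI x = 1) ∧
    (∀ x ∈ Icc (0:ℝ) 1, x ≠ 1 → (∀ i, x ∉ Icc (a i) (b i)) → natNegS SI x = 1) := by
  refine ⟨?_, fun i hb x hx => natNegS_top hfam hs hSI hb hx, ?_, ?_⟩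
  · apply le_antisymm
    · exact csInf_le ⟨0, fun y hy => hy.1.1⟩ ⟨by simp, ordSum_one_zero hfam hs hSI⟩
    · exact Real.sInf_nonneg fun y hy => hy.1.1
  · intro i hb x hx
    have hx1 : x < 1 := hx.2.trans_lt hb
    have hx01 : x ∈ Icc (0:ℝ) 1 := ⟨(hfam.1 i).1.trans hx.1, hx1.le⟩
    refine natNegS_eq_one hfam hs hSI hx01 fun y hy hy1 => ?_
    rcases ordSum_eq_one_cases hfam hs hSI hx01 hx1.ne hy hy1 with h | ⟨j, hj, hxj, hyj⟩
    · exact h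
    · have hij : i ≠ j := by
        rintro rfl
        linarith
      have hab := (hfam.1 i).2.1
      -- Disjointness of the two summands forces `x = b i = a j`.
      have hxa : x = a j := by
        have h := hfam.min_le_max hij
        rw [hj, min_eq_left hb.le] at h
        rcases le_max_iff.1 h with h | h
        · linarith
        · linarith [hx.2, hxj.1]
      have habj := (hfam.1 j).2.1
      rw [(hSI x hx01 y hy).1 j hxj hyj, hxa, sub_self, zero_div,
        (hs j).zero_left (rescale_mem habj hyj), mul_div_cancel₀ _ (sub_pos.2 habj).ne'] at hy1
      linarith
  · intro x hx hx1 hno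
    refine natNegS_eq_one hfam hs hSI hx fun y hy hy1 => ?_
    rcases ordSum_eq_one_cases hfam hs hSI hx hx1 hy hy1 with h | ⟨j, -, hxj, -⟩
    · exact h
    · exact absurd hxj (hno j)
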